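/- arXiv:2603.21603 — 6 statements merged into one kernel-verified Lean document; each statement's English description precedes it below -/
import Mathlib

section
/- Let I = [x0, x1] be a compact interval with x0 < x1, let D ⊆ ℝ³, and fix positive reals ε_y, ε̂_y, ε_z and integers n > k > 1. Let α(t) = (t, p_y(t), p_z(t)) be a graph curve over I, set δ(k,n) = 2(n−k)/((n−1)(x1−x0)) and ε̂_z = δ(k,n)·ε_z. For i = 1, …, n define the translated graph curves α_i(t) = (t, p_y(t), p_z(t) + c_i), where c_i = −ε_z(k−1) + 2ε_z(k−1)(i−1)/(n−1). Then the big u-tube equals the union of the small u-tubes: U(α, ε_y, ε̂_y, k·ε_z, ε̂_z) = ⋃_{i=1}^{n} U(α_i, ε_y, ε̂_y, ε_z, ε̂_z). -/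
open Set

/-- The u-tube around the graph curve `t ↦ (t, py t, pz t)` over `I`, with image in `D`.
A graph curve is represented by its pair of coordinate functions `(γ_y, γ_z)`. -/
def uTube (D : Set (ℝ × ℝ × ℝ)) (I : Set ℝ) (py pz : ℝ → ℝ)
    (εy εy' εz εz' : ℝ) : Set ((ℝ → ℝ) × (ℝ → ℝ)) :=
  {γ | ContDiffOn ℝ 1 γ.1 I ∧ ContDiffOn ℝ 1 γ.2 I ∧
      (∀ t ∈ I, (t, γ.1 t, γ.2 t) ∈ D) ∧
      (∀ t ∈ I, |γ.1 t - py t| ≤ εy) ∧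
      (∀ t ∈ I, |derivWithin γ.1 I t - derivWithin py I t| ≤ εy') ∧
      (∀ t ∈ I, |γ.2 t - pz t| ≤ εz) ∧
      (∀ t ∈ I, |derivWithin γ.2 I t - derivWithin pz I t| ≤ εz')}

/-- The oscillation of a function on `[a, b]` is at most `C * (b - a)` if its derivative is bounded
by `C`. -/
lemma abs_sub_le_of_abs_derivWithin_le {g : ℝ → ℝ} {a b C : ℝ}
    (hg : DifferentiableOn ℝ g (Icc a b))
    (hC : ∀ t ∈ Icc a b, |derivWithin g (Icc a b) t| ≤ C) {s t : ℝ}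
    (hs : s ∈ Icc a b) (ht : t ∈ Icc a b) : |g t - g s| ≤ C * (b - a) := by
  have h := (convex_Icc a b).norm_image_sub_le_of_norm_derivWithin_le hg hC hs ht
  have hC0 : 0 ≤ C := (abs_nonneg _).trans (hC s hs)
  refine h.trans (mul_le_mul_of_nonneg_left ?_ hC0)
  rw [Real.norm_eq_abs, abs_le]
  constructor <;> linarith [hs.1, hs.2, ht.1, ht.2]

/-- If intervals of radius `ε` have centres `c 1, …, c n` with consecutive centres increasing by at
most `2 * ε - L`, then the part of `[m, m + L]` below `c n + ε` is contained in one of them,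
provided `m` is at least `c 1 - ε`. -/
lemma exists_center_of_diam_le {c : ℕ → ℝ} {ε L m : ℝ} {n : ℕ} (hn : 1 ≤ n)
    (hstep : ∀ i, c (i + 1) ≤ c i + (2 * ε - L)) (hm : c 1 - ε ≤ m) :
    ∃ i ∈ Finset.Icc 1 n, ∀ v, m ≤ v → v ≤ m + L → v ≤ c n + ε → |v - c i| ≤ ε := by
  classical
  set i := Nat.findGreatest (fun i => c i - ε ≤ m) n
  have hspec : c i - ε ≤ m := Nat.findGreatest_spec (P := fun i => c i - ε ≤ m) hn hm
  have h1 : 1 ≤ i := Nat.le_findGreatest hn hm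
  have hin : i ≤ n := Nat.findGreatest_le n
  refine ⟨i, Finset.mem_Icc.2 ⟨h1, hin⟩, fun v hmv hvL hvn => ?_⟩
  rw [abs_le]
  refine ⟨by linarith, ?_⟩
  rcases hin.eq_or_lt with h | h
  · rw [h]; linarith
  · have hnot : ¬ c (i + 1) - ε ≤ m :=
      Nat.findGreatest_is_greatest (P := fun i => c i - ε ≤ m) (Nat.lt_succ_self i) h
    linarith [hstep i]

/-- The big u-tube equals the union of the `n` translated small u-tubes. -/
theorem stmt0 (x0 x1 : ℝ) (hx : x0 < x1) (D : Set (ℝ × ℝ × ℝ))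
    (εy εy' εz : ℝ) (hεy : 0 < εy) (hεy' : 0 < εy') (hεz : 0 < εz)
    (n k : ℕ) (hk : 1 < k) (hkn : k < n)
    (py pz : ℝ → ℝ)
    (hpy : ContDiffOn ℝ 1 py (Icc x0 x1)) (hpz : ContDiffOn ℝ 1 pz (Icc x0 x1))
    (εz' : ℝ)
    (hεz' : εz' = 2 * ((n : ℝ) - (k : ℝ)) / (((n : ℝ) - 1) * (x1 - x0)) * εz)
    (c : ℕ → ℝ)
    (hc : ∀ i : ℕ, c i = -εz * ((k : ℝ) - 1)
        + 2 * εz * ((k : ℝ) - 1) * ((i : ℝ) - 1) / ((n : ℝ) - 1)) :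
    uTube D (Icc x0 x1) py pz εy εy' ((k : ℝ) * εz) εz' =
      ⋃ i ∈ Finset.Icc 1 n,
        uTube D (Icc x0 x1) py (fun t => pz t + c i) εy εy' εz εz' := by
  have hk1 : (1 : ℝ) < k := by exact_mod_cast hk
  have hkn' : (k : ℝ) < n := by exact_mod_cast hkn
  have hn1 : (0 : ℝ) < (n : ℝ) - 1 := by linarith
  have hx' : 0 < x1 - x0 := sub_pos.2 hx
  have hc1 : c 1 = -εz * ((k : ℝ) - 1) := by rw [hc]; simp
  have hcn : c n = εz * ((k : ℝ) - 1) := by rw [hc]; field_simp; ring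
  have hL : εz' * (x1 - x0) = 2 * εz * ((n : ℝ) - k) / ((n : ℝ) - 1) := by
    rw [hεz']; field_simp
  have hstep : ∀ i, c (i + 1) ≤ c i + (2 * εz - εz' * (x1 - x0)) := by
    intro i
    rw [hL, hc, hc]
    apply le_of_eq
    push_cast
    field_simp
    ring
  ext γ
  simp only [mem_iUnion, exists_prop, uTube, mem_ofPred_eq, derivWithin_add_const]
  constructor
  · rintro ⟨h1, h2, hD, hy, hy', hz, hz'⟩
    have hγd := h2.differentiableOn one_ne_zero
    have hpd := hpz.differentiableOn one_ne_zero
    have hgd : DifferentiableOn ℝ (γ.2 - pz) (Icc x0 x1) := hγd.sub hpd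
    obtain ⟨s, hs, hmin⟩ :=
      isCompact_Icc.exists_isMinOn (nonempty_Icc.2 hx.le) hgd.continuousOn
    have hosc : ∀ t ∈ Icc x0 x1,
        |(γ.2 - pz) t - (γ.2 - pz) s| ≤ εz' * (x1 - x0) := fun t ht =>
      abs_sub_le_of_abs_derivWithin_le hgd
        (fun u hu => by
          rw [derivWithin_sub (hγd u hu) (hpd u hu)]
          exact hz' u hu) hs ht
    obtain ⟨i, hi, hcover⟩ := exists_center_of_diam_le (m := (γ.2 - pz) s)
      (hk.trans hkn).le hstep (by
        have := (abs_le.1 (hz s hs)).1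
        rw [hc1, Pi.sub_apply]
        linarith)
    refine ⟨i, hi, h1, h2, hD, hy, hy', fun t ht => ?_, hz'⟩
    have := hcover ((γ.2 - pz) t) (hmin ht) (by linarith [(abs_le.1 (hosc t ht)).2]) (by
      have := (abs_le.1 (hz t ht)).2
      rw [hcn, Pi.sub_apply]
      linarith)
    rwa [Pi.sub_apply, sub_sub] at this
  · rintro ⟨i, hi, h1, h2, hD, hy, hy', hz, hz'⟩
    refine ⟨h1, h2, hD, hy, hy', fun t ht => ?_, hz'⟩
    obtain ⟨hi1, hin⟩ := Finset.mem_Icc.1 hi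
    have hi1' : (1 : ℝ) ≤ i := by exact_mod_cast hi1
    have hin' : (i : ℝ) ≤ n := by exact_mod_cast hin
    have hA : 0 ≤ 2 * εz * ((k : ℝ) - 1) := by
      have : 0 < (k : ℝ) - 1 := by linarith
      positivity
    have hlo : c 1 ≤ c i := by
      rw [hc1, hc]
      exact le_add_of_nonneg_right
        (div_nonneg (mul_nonneg hA (by linarith)) hn1.le)
    have hhi : c i ≤ c n := by
      rw [hc i, hc n]
      gcongr
    rw [hc1] at hlo
    rw [hcn] at hhi
    have h := abs_le.1 (hz t ht)
    rw [abs_le]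
    constructor <;> linarith [h.1, h.2]
end

section
/- Let I = [a, b] with a < b and put L = b − a. Let n > k > 1 be integers, let ε > 0, and set ε̂ = 2(n−k)ε/((n−1)L). For i = 1, …, n define c_i = −(k−1)ε + 2(k−1)ε(i−1)/(n−1). If g : I → ℝ is differentiable with |g(t)| ≤ k·ε and |g'(t)| ≤ ε̂ for all t ∈ I, then there exists an index i ∈ {1, …, n} such that |g(t) − c_i| ≤ ε for all t ∈ I. -/
open Set

/-- A property that holds at `1` either persists up to `n` or fails right after some index
where it holds. -/
theorem exists_mem_Icc_and_eq_or_not_succ {n : ℕ} (hn : 1 ≤ n) {p : ℕ → Prop} (h1 : p 1) :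
    ∃ i ∈ Finset.Icc 1 n, p i ∧ (i = n ∨ ¬ p (i + 1)) := by
  classical
  refine ⟨Nat.findGreatest p n, Finset.mem_Icc.2 ⟨Nat.le_findGreatest hn h1,
    Nat.findGreatest_le n⟩, Nat.findGreatest_spec hn h1, ?_⟩
  rcases (Nat.findGreatest_le (P := p) n).eq_or_lt with h | h
  · exact Or.inl h
  · exact Or.inr (Nat.findGreatest_is_greatest (Nat.lt_succ_self _) h)

/-- A differentiable function on `[a, b]` whose derivative is bounded by `C` oscillates by at
most `C * (b - a)`. -/
theorem sub_le_mul_of_abs_derivWithin_le {a b C : ℝ} {g : ℝ → ℝ}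
    (hg : DifferentiableOn ℝ g (Icc a b))
    (hgd : ∀ t ∈ Icc a b, |derivWithin g (Icc a b) t| ≤ C)
    {s t : ℝ} (hs : s ∈ Icc a b) (ht : t ∈ Icc a b) : g t - g s ≤ C * (b - a) := by
  have hC : 0 ≤ C := (abs_nonneg _).trans (hgd s hs)
  calc g t - g s ≤ ‖g t - g s‖ := le_abs_self _
    _ ≤ C * ‖t - s‖ :=
      (convex_Icc a b).norm_image_sub_le_of_norm_derivWithin_le hg hgd hs ht
    _ ≤ C * (b - a) := by
      gcongr
      exact abs_le.2 ⟨by linarith [hs.2, ht.1], by linarith [hs.1, ht.2]⟩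

/-- The core covering estimate behind the splitting of a big u-tube into small u-tubes:
a differentiable function on `[a, b]` bounded by `k·ε` whose derivative is bounded by
`ε̂ = 2(n−k)ε/((n−1)(b−a))` lies within distance `ε` of one of the constants `c i`. -/
theorem stmt1 (a b : ℝ) (hab : a < b) (n k : ℕ) (hk : 1 < k) (hkn : k < n)
    (ε : ℝ) (hε : 0 < ε) (εhat : ℝ)
    (hεhat : εhat = 2 * ((n : ℝ) - (k : ℝ)) * ε / (((n : ℝ) - 1) * (b - a)))
    (c : ℕ → ℝ)
    (hc : ∀ i : ℕ, c i = -((k : ℝ) - 1) * ε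
        + 2 * ((k : ℝ) - 1) * ε * ((i : ℝ) - 1) / ((n : ℝ) - 1))
    (g : ℝ → ℝ) (hg : DifferentiableOn ℝ g (Icc a b))
    (hgb : ∀ t ∈ Icc a b, |g t| ≤ (k : ℝ) * ε)
    (hgd : ∀ t ∈ Icc a b, |derivWithin g (Icc a b) t| ≤ εhat) :
    ∃ i ∈ Finset.Icc 1 n, ∀ t ∈ Icc a b, |g t - c i| ≤ ε := by
  have hn : (0 : ℝ) < (n : ℝ) - 1 := by
    have : (1 : ℝ) < n := by exact_mod_cast hk.trans hkn
    linarith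
  have hL : 0 < b - a := sub_pos.2 hab
  obtain ⟨t₀, ht₀, hmin⟩ :=
    isCompact_Icc.exists_isMinOn (nonempty_Icc.2 hab.le) hg.continuousOn
  have hfirst : c 1 - ε ≤ g t₀ := by
    have h := (abs_le.1 (hgb t₀ ht₀)).1
    rw [hc 1]
    norm_num
    linarith
  have hlast : c n + ε = k * ε := by
    rw [hc n]
    field_simp
    ring
  have hoverlap (i : ℕ) : εhat * (b - a) = c i + ε - (c (i + 1) - ε) := by
    rw [hεhat, hc i, hc (i + 1)]
    push_cast
    field_simp
    ring
  obtain ⟨i, hi, hlow, hup⟩ :=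
    exists_mem_Icc_and_eq_or_not_succ (hk.trans hkn).le (p := fun i => c i - ε ≤ g t₀) hfirst
  refine ⟨i, hi, fun t ht => abs_le.2 ⟨?_, ?_⟩⟩
  · have : g t₀ ≤ g t := hmin ht
    linarith
  · rcases hup with rfl | hup
    · linarith [(abs_le.1 (hgb t ht)).2]
    · linarith [sub_le_mul_of_abs_derivWithin_le hg hgd ht₀ ht, hoverlap i, not_le.1 hup]
end

section
/- Let I = [x0, x1] be a compact interval with x0 < x1, let Ω be a family of graph curves over I, let f : ℝ³ → ℝ³ be C¹, let α be a graph curve over I, and let s : I → I be C¹ with s(I) ⊆ (x0, x1). Assume that f∘α∘s is a graph curve over I lying in the C¹-interior of Ω. Then there exist ε > 0 and a compact set K ⊂ ℝ³ such that: for every C¹ map g : ℝ³ → ℝ³ satisfying sup_{p∈K}(|g(p) − f(p)| + ‖Dg(p) − Df(p)‖) < ε, and every C¹ curve γ : I → ℝ³ satisfying sup_{t∈I}(|γ(t) − α(t)| + |γ'(t) − α'(t)|) < ε, there exists a C¹ function r : I → I with r(I) ⊆ (x0, x1) such that g∘γ∘r is a graph curve over I lying in the C¹-interior of Ω. -/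
open Set

/-- A graph curve over `I`: a `C¹` map `γ : I → ℝ³` of the form `γ t = (t, γ_y t, γ_z t)`. -/
def IsGraphCurve (I : Set ℝ) (γ : ℝ → ℝ × ℝ × ℝ) : Prop :=
  ContDiffOn ℝ 1 γ I ∧ ∀ t ∈ I, (γ t).1 = t

/-- The `C¹`-distance between two curves over `I`: sum of the sup of the `C⁰` distance
and the sup of the distance between derivatives. -/
noncomputable def C1dist (I : Set ℝ) (γ δ : ℝ → ℝ × ℝ × ℝ) : ℝ :=
  (⨆ t : I, ‖γ (t : ℝ) - δ (t : ℝ)‖) +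
    (⨆ t : I, ‖derivWithin γ I (t : ℝ) - derivWithin δ I (t : ℝ)‖)

/-- `γ` lies in the `C¹`-interior of the family `Ω` of graph curves over `I`. -/
def InC1Interior (I : Set ℝ) (Ω : Set (ℝ → ℝ × ℝ × ℝ)) (γ : ℝ → ℝ × ℝ × ℝ) : Prop :=
  ∃ δ > 0, ∀ η : ℝ → ℝ × ℝ × ℝ, IsGraphCurve I η → C1dist I γ η < δ → η ∈ Ω

section Helpers

open Filter Topology

/-- A section `r` of a `C¹` function `G` with nonvanishing derivative is `C¹` within `I` as soon as
`r t` is the only solution of `G v = t` within distance `η` of a continuous function `s`. -/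
theorem contDiffWithinAt_of_unique_section {I : Set ℝ} {G r s : ℝ → ℝ} {η t₀ : ℝ}
    (hs : ContinuousWithinAt s I t₀) (hG : ContDiffAt ℝ 1 G (r t₀))
    (hG' : deriv G (r t₀) ≠ 0) (hGr : G (r t₀) = t₀) (hrs : |r t₀ - s t₀| < η)
    (huniq : ∀ t ∈ I, ∀ v, |v - s t| < η → G v = t → r t = v) :
    ContDiffWithinAt ℝ 1 r I t₀ := by
  have hstrict := hG.hasStrictDerivAt one_ne_zero
  have hfd := (hstrict.hasStrictFDerivAt_equiv hG').hasFDerivAt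
  set ρ := hG.localInverse hfd one_ne_zero
  have hρ : ContDiffAt ℝ 1 ρ t₀ := by
    simpa only [hGr] using hG.to_localInverse hfd one_ne_zero
  have hρt₀ : ρ t₀ = r t₀ := by
    simpa only [hGr] using hG.localInverse_apply_image hfd one_ne_zero
  have hinv : ∀ᶠ t in 𝓝 t₀, G (ρ t) = t := by
    have := (hG.hasStrictFDerivAt' hfd one_ne_zero).eventually_right_inverse
    rwa [hGr] at this
  have hclose : ∀ᶠ t in 𝓝[I] t₀, |ρ t - s t| < η :=
    ((hρ.continuousAt.continuousWithinAt.sub hs).abs).eventually_lt_const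
      (by simpa only [Pi.sub_apply, hρt₀] using hrs)
  refine hρ.contDiffWithinAt.congr_of_eventuallyEq ?_ hρt₀.symm
  filter_upwards [hclose, hinv.filter_mono nhdsWithin_le_nhds, self_mem_nhdsWithin]
    with t h1 h2 h3 using huniq t h3 _ h1 h2

/-- A function with derivative at least `1 / 2` on `[u - η, u + η]` and value less than `η / 2` in
absolute value at `u` has exactly one zero in `(u - η, u + η)`. -/
theorem existsUnique_zero_of_half_le_deriv {φ φ' : ℝ → ℝ} {u η : ℝ} (hη : 0 < η)
    (hφ : ∀ v ∈ Icc (u - η) (u + η), HasDerivAt φ (φ' v) v)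
    (hφ' : ∀ v ∈ Icc (u - η) (u + η), 1 / 2 ≤ φ' v) (hu : |φ u| < η / 2) :
    ∃ w, |w - u| < η ∧ φ w = 0 ∧ ∀ v, |v - u| < η → φ v = 0 → w = v := by
  have hcont : ContinuousOn φ (Icc (u - η) (u + η)) :=
    fun v hv => (hφ v hv).continuousAt.continuousWithinAt
  have hgrow := (convex_Icc (u - η) (u + η)).mul_sub_le_image_sub_of_le_deriv hcont
    (fun v hv => (hφ v (interior_subset hv)).differentiableAt.differentiableWithinAt)
    (C := 1 / 2) (fun v hv => by
      rw [(hφ v (interior_subset hv)).deriv]; exact hφ' v (interior_subset hv))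
  have h1 := hgrow (u - η) ⟨by linarith, by linarith⟩ u ⟨by linarith, by linarith⟩ (by linarith)
  have h2 := hgrow u ⟨by linarith, by linarith⟩ (u + η) ⟨by linarith, by linarith⟩ (by linarith)
  rw [abs_lt] at hu
  obtain ⟨w, hw, hw0⟩ := intermediate_value_Ioo (by linarith : u - η ≤ u + η) hcont
    (show (0 : ℝ) ∈ Ioo (φ (u - η)) (φ (u + η)) from ⟨by linarith, by linarith⟩)
  refine ⟨w, abs_lt.2 ⟨by linarith [hw.1], by linarith [hw.2]⟩, hw0, fun v hv hv0 => ?_⟩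
  rw [abs_lt] at hv
  have hv' : v ∈ Icc (u - η) (u + η) := ⟨by linarith, by linarith⟩
  have hw' := Ioo_subset_Icc_self hw
  rcases le_total w v with h | h
  · linarith [hgrow w hw' v hv' h]
  · linarith [hgrow v hv' w hw' h]

variable {F : Type*} [NormedAddCommGroup F] [NormedSpace ℝ F]

/-- Rescaling vectors to have first coordinate `1` is Lipschitz on bounded sets away from the
vectors with vanishing first coordinate. -/
theorem norm_smul_sub_smul_le {v w : ℝ × F} {p q S M θ : ℝ} (hp : |p| ≤ S) (hw : ‖w‖ ≤ M)
    (hpw : p * w.1 = 1) (hqv : q * v.1 = 1) (hvw : ‖v - w‖ ≤ θ) (hS : S * θ ≤ 1 / 2) :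
    ‖q • v - p • w‖ ≤ (2 * S + 2 * S ^ 2 * M) * θ := by
  have hS0 : 0 ≤ S := (abs_nonneg p).trans hp
  have hθ0 : 0 ≤ θ := (norm_nonneg _).trans hvw
  have hfst : |w.1 - v.1| ≤ θ := by
    rw [abs_sub_comm]
    exact (norm_fst_le (v - w)).trans hvw
  have hqp : q - p = q * p * (w.1 - v.1) := by linear_combination (-q) * hpw + p * hqv
  have hdiff : |q - p| ≤ |q| * (S * θ) := by
    rw [hqp, abs_mul, abs_mul, mul_assoc]
    gcongr
  have hq : |q| ≤ 2 * S := by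
    have h1 : |q| ≤ |q - p| + |p| := by simpa using abs_add_le (q - p) p
    nlinarith [abs_nonneg q]
  calc ‖q • v - p • w‖ = ‖q • (v - w) + (q - p) • w‖ := by
        congr 1; rw [smul_sub, sub_smul]; abel
    _ ≤ |q| * ‖v - w‖ + |q - p| * ‖w‖ := by
        refine (norm_add_le _ _).trans_eq ?_
        rw [norm_smul, norm_smul, Real.norm_eq_abs, Real.norm_eq_abs]
    _ ≤ (2 * S) * θ + ((2 * S) * (S * θ)) * M := by
        gcongr
        exact hdiff.trans (by gcongr)
    _ = _ := by ring

/-- A `C¹` curve on `[x0, x1]` has a derivative at interior points. -/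
theorem ContDiffOn.hasDerivAt_derivWithin_Icc {E : Type*} [NormedAddCommGroup E] [NormedSpace ℝ E]
    {x0 x1 u : ℝ} {k : ℝ → E} (hk : ContDiffOn ℝ 1 k (Icc x0 x1)) (hu : u ∈ Ioo x0 x1) :
    HasDerivAt k (derivWithin k (Icc x0 x1) u) u :=
  ((hk.differentiableOn one_ne_zero) u
    (Ioo_subset_Icc_self hu)).hasDerivWithinAt.hasDerivAt (Icc_mem_nhds hu.1 hu.2)

/-- If `k ∘ r` has first coordinate `t` at parameter `t`, its derivative is the derivative of `k`
rescaled by the reparametrisation speed to have first coordinate `1`. -/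
theorem derivWithin_comp_of_fst_eq {x0 x1 t : ℝ} (hx : x0 < x1) {k : ℝ → ℝ × F} {r : ℝ → ℝ}
    (hk : ContDiffOn ℝ 1 k (Icc x0 x1)) (hr : ContDiffOn ℝ 1 r (Icc x0 x1))
    (hrmem : ∀ t ∈ Icc x0 x1, r t ∈ Ioo x0 x1) (hkr : ∀ t ∈ Icc x0 x1, (k (r t)).1 = t)
    (ht : t ∈ Icc x0 x1) :
    derivWithin (k ∘ r) (Icc x0 x1) t =
        derivWithin r (Icc x0 x1) t • derivWithin k (Icc x0 x1) (r t) ∧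
      derivWithin r (Icc x0 x1) t * (derivWithin k (Icc x0 x1) (r t)).1 = 1 := by
  have hud : UniqueDiffWithinAt ℝ (Icc x0 x1) t := uniqueDiffOn_Icc hx t ht
  have hcomp := (hk.hasDerivAt_derivWithin_Icc (hrmem t ht)).scomp_hasDerivWithinAt t
    ((hr.differentiableOn one_ne_zero) t ht).hasDerivWithinAt
  refine ⟨hcomp.derivWithin hud, ?_⟩
  have hfst : HasDerivWithinAt (fun τ => (k (r τ)).1)
      (derivWithin r (Icc x0 x1) t • derivWithin k (Icc x0 x1) (r t)).1 (Icc x0 x1) t :=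
    (ContinuousLinearMap.fst ℝ ℝ F).hasFDerivAt.comp_hasDerivWithinAt t hcomp
  have hid : HasDerivWithinAt (fun τ => (k (r τ)).1) 1 (Icc x0 x1) t :=
    (hasDerivWithinAt_id t _).congr hkr (hkr t ht)
  exact hud.eq_deriv _ hfst hid

/-- If `h ∘ s` is a graph, then every curve `k` sufficiently `C¹`-close to `h` can be
reparametrised to a graph `C¹`-close to `h ∘ s`. -/
theorem exists_reparametrization_of_C1_close {x0 x1 : ℝ} (hx : x0 < x1) {h : ℝ → ℝ × F}
    (hh : ContDiffOn ℝ 1 h (Icc x0 x1)) {s : ℝ → ℝ} (hs : ContDiffOn ℝ 1 s (Icc x0 x1))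
    (hsmem : ∀ t ∈ Icc x0 x1, s t ∈ Ioo x0 x1) (hhs : ∀ t ∈ Icc x0 x1, (h (s t)).1 = t)
    {δ : ℝ} (hδ : 0 < δ) :
    ∃ ε > 0, ∀ k : ℝ → ℝ × F, ContDiffOn ℝ 1 k (Icc x0 x1) →
      (∀ t ∈ Icc x0 x1, ‖k t - h t‖ ≤ ε) →
      (∀ t ∈ Icc x0 x1,
        ‖derivWithin k (Icc x0 x1) t - derivWithin h (Icc x0 x1) t‖ ≤ ε) →
      ∃ r : ℝ → ℝ, ContDiffOn ℝ 1 r (Icc x0 x1) ∧ (∀ t ∈ Icc x0 x1, r t ∈ Ioo x0 x1) ∧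
        (∀ t ∈ Icc x0 x1, (k (r t)).1 = t) ∧
        (∀ t ∈ Icc x0 x1, ‖(k ∘ r) t - (h ∘ s) t‖ ≤ δ) ∧
        ∀ t ∈ Icc x0 x1,
          ‖derivWithin (k ∘ r) (Icc x0 x1) t - derivWithin (h ∘ s) (Icc x0 x1) t‖ ≤ δ := by
  set I := Icc x0 x1
  have hIc : IsCompact I := isCompact_Icc
  have hud : UniqueDiffOn ℝ I := uniqueDiffOn_Icc hx
  have hh' : ContinuousOn (derivWithin h I) I := hh.continuousOn_derivWithin hud le_rfl
  obtain ⟨S₀, hS₀⟩ := hIc.exists_bound_of_continuousOn (hs.continuousOn_derivWithin hud le_rfl)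
  obtain ⟨M₀, hM₀⟩ := hIc.exists_bound_of_continuousOn hh'
  obtain ⟨S, hSpos, hS⟩ : ∃ S > 0, ∀ t ∈ I, |derivWithin s I t| ≤ S :=
    ⟨max S₀ 1, by positivity, fun t ht => (hS₀ t ht).trans (le_max_left _ _)⟩
  obtain ⟨M, hMpos, hM⟩ : ∃ M > 0, ∀ t ∈ I, ‖derivWithin h I t‖ ≤ M :=
    ⟨max M₀ 1, by positivity, fun t ht => (hM₀ t ht).trans (le_max_left _ _)⟩
  obtain ⟨θ, hθ, hθS, hθδ⟩ : ∃ θ > 0, S * θ ≤ 1 / 2 ∧ (2 * S + 2 * S ^ 2 * M) * θ ≤ δ := by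
    refine ⟨min (1 / (2 * S)) (δ / (2 * S + 2 * S ^ 2 * M)), by positivity, ?_, ?_⟩
    · calc _ ≤ S * (1 / (2 * S)) := by gcongr; exact min_le_left _ _
        _ = 1 / 2 := by field_simp
    · calc _ ≤ (2 * S + 2 * S ^ 2 * M) * (δ / (2 * S + 2 * S ^ 2 * M)) := by
            gcongr; exact min_le_right _ _
        _ = δ := by field_simp
  obtain ⟨η₁, hη₁, hunif₁⟩ := Metric.uniformContinuousOn_iff.1
    (hIc.uniformContinuousOn_of_continuous hh.continuousOn) (δ / 2) (by positivity)
  obtain ⟨η₂, hη₂, hunif₂⟩ := Metric.uniformContinuousOn_iff.1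
    (hIc.uniformContinuousOn_of_continuous hh') (θ / 2) (by positivity)
  obtain ⟨η₃, hη₃, hsub⟩ :=
    (hIc.image_of_continuousOn hs.continuousOn).exists_cthickening_subset_open isOpen_Ioo
      (image_subset_iff.2 hsmem)
  obtain ⟨η, hη, hηη₁, hηη₂, hηη₃⟩ : ∃ η > 0, η < η₁ ∧ η < η₂ ∧ η ≤ η₃ :=
    ⟨min (min (η₁ / 2) (η₂ / 2)) η₃, by positivity,
      ((min_le_left _ _).trans (min_le_left _ _)).trans_lt (by linarith),
      ((min_le_left _ _).trans (min_le_right _ _)).trans_lt (by linarith), min_le_right _ _⟩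
  have hmem : ∀ t ∈ I, ∀ v, |v - s t| ≤ η → v ∈ Ioo x0 x1 := fun t ht v hv =>
    hsub (Metric.mem_cthickening_of_dist_le v (s t) _ _ (mem_image_of_mem s ht)
      (hv.trans hηη₃))
  refine ⟨min (min (θ / 2) (δ / 2)) (η / (4 * S)), by positivity, fun k hk hkh hkh' => ?_⟩
  have hval : ∀ t ∈ I, ∀ v, |v - s t| ≤ η → ‖k v - h (s t)‖ ≤ δ := by
    intro t ht v hv
    have hvI := Ioo_subset_Icc_self (hmem t ht v hv)
    have h1 := (hkh v hvI).trans ((min_le_left _ _).trans (min_le_right _ _))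
    have h2 := hunif₁ v hvI (s t) (Ioo_subset_Icc_self (hsmem t ht)) (hv.trans_lt hηη₁)
    rw [dist_eq_norm] at h2
    linarith [norm_sub_le_norm_sub_add_norm_sub (k v) (h v) (h (s t))]
  have hder : ∀ t ∈ I, ∀ v, |v - s t| ≤ η →
      ‖derivWithin k I v - derivWithin h I (s t)‖ ≤ θ := by
    intro t ht v hv
    have hvI := Ioo_subset_Icc_self (hmem t ht v hv)
    have h1 := (hkh' v hvI).trans ((min_le_left _ _).trans (min_le_left _ _))
    have h2 := hunif₂ v hvI (s t) (Ioo_subset_Icc_self (hsmem t ht)) (hv.trans_lt hηη₂)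
    rw [dist_eq_norm] at h2
    linarith [norm_sub_le_norm_sub_add_norm_sub (derivWithin k I v) (derivWithin h I v)
      (derivWithin h I (s t))]
  have hspeed := fun t (ht : t ∈ I) => derivWithin_comp_of_fst_eq hx hh hs hsmem hhs ht
  have hkfst : ∀ v ∈ Ioo x0 x1, HasDerivAt (fun v => (k v).1) (derivWithin k I v).1 v :=
    fun v hv => (ContinuousLinearMap.fst ℝ ℝ F).hasFDerivAt.comp_hasDerivAt v
      (hk.hasDerivAt_derivWithin_Icc hv)
  have hslope : ∀ t ∈ I, ∀ v, |v - s t| ≤ η →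
      1 / 2 ≤ derivWithin s I t * (derivWithin k I v).1 := by
    intro t ht v hv
    have h1 : |derivWithin s I t * ((derivWithin k I v).1 - (derivWithin h I (s t)).1)| ≤
        1 / 2 := by
      rw [abs_mul]
      refine le_trans ?_ hθS
      gcongr
      · exact hS t ht
      · exact (norm_fst_le (derivWithin k I v - derivWithin h I (s t))).trans (hder t ht v hv)
    rw [mul_sub, (hspeed t ht).2] at h1
    linarith [(abs_le.1 h1).1]
  have hroot : ∀ t ∈ I, ∃ w, |w - s t| < η ∧ (k w).1 = t ∧
      ∀ v, |v - s t| < η → (k v).1 = t → w = v := by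
    intro t ht
    have hs0 : derivWithin s I t ≠ 0 := left_ne_zero_of_mul_eq_one (hspeed t ht).2
    have habs : ∀ v ∈ Icc (s t - η) (s t + η), |v - s t| ≤ η := fun v hv =>
      abs_le.2 ⟨by linarith [hv.1], by linarith [hv.2]⟩
    obtain ⟨w, hw, hw0, hwuniq⟩ := existsUnique_zero_of_half_le_deriv
      (φ := fun v => derivWithin s I t * ((k v).1 - t))
      (φ' := fun v => derivWithin s I t * (derivWithin k I v).1) (u := s t) hη
      (fun v hv => ((hkfst v (hmem t ht v (habs v hv))).sub_const t).const_mul _)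
      (fun v hv => hslope t ht v (habs v hv)) (by
        have h1 := (hkh (s t) (Ioo_subset_Icc_self (hsmem t ht))).trans (min_le_right _ _)
        have h2 : |(k (s t)).1 - t| ≤ η / (4 * S) := by
          simpa only [Prod.fst_sub, hhs t ht, Real.norm_eq_abs]
            using (norm_fst_le (k (s t) - h (s t))).trans h1
        calc |derivWithin s I t * ((k (s t)).1 - t)| ≤ S * (η / (4 * S)) := by
              rw [abs_mul]; gcongr; exact hS t ht
          _ = η / 4 := by field_simp
          _ < η / 2 := by linarith)
    refine ⟨w, hw, ?_, fun v hv hv0 => hwuniq v hv (by simp [hv0])⟩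
    exact sub_eq_zero.1 ((mul_eq_zero.1 hw0).resolve_left hs0)
  choose! r hr using hroot
  have hrmem : ∀ t ∈ I, r t ∈ Ioo x0 x1 := fun t ht => hmem t ht _ (hr t ht).1.le
  have hrC : ContDiffOn ℝ 1 r I := by
    intro t ht
    refine contDiffWithinAt_of_unique_section (G := fun v => (k v).1) (hs.continuousOn t ht)
      ?_ ?_ (hr t ht).2.1 (hr t ht).1 fun τ hτ => (hr τ hτ).2.2
    · exact (hk.contDiffAt (Icc_mem_nhds (hrmem t ht).1 (hrmem t ht).2)).fst
    · rw [(hkfst _ (hrmem t ht)).deriv]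
      intro h0
      have := hslope t ht _ (hr t ht).1.le
      rw [h0] at this
      norm_num at this
  have hkr : ∀ t ∈ I, (k (r t)).1 = t := fun t ht => (hr t ht).2.1
  refine ⟨r, hrC, hrmem, hkr, fun t ht => hval t ht _ (hr t ht).1.le, fun t ht => ?_⟩
  have hkspeed := derivWithin_comp_of_fst_eq hx hk hrC hrmem hkr ht
  rw [hkspeed.1, (hspeed t ht).1]
  exact (norm_smul_sub_smul_le (hS t ht) (hM _ (Ioo_subset_Icc_self (hsmem t ht))) (hspeed t ht).2
    hkspeed.2 (hder t ht _ (hr t ht).1.le) hθS).trans hθδ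

/-- Composition of a `C¹` map with a `C¹` curve is continuous for the `C¹` topologies. -/
theorem exists_C1_close_comp {E G : Type*} [NormedAddCommGroup E] [NormedSpace ℝ E]
    [ProperSpace E] [NormedAddCommGroup G] [NormedSpace ℝ G] {x0 x1 : ℝ} (hx : x0 < x1)
    {f : E → G} (hf : ContDiff ℝ 1 f) {α : ℝ → E} (hα : ContDiffOn ℝ 1 α (Icc x0 x1))
    {θ : ℝ} (hθ : 0 < θ) :
    ∃ ε > 0, ∃ K : Set E, IsCompact K ∧ ∀ g : E → G, ContDiff ℝ 1 g →
      (∀ p ∈ K, ‖g p - f p‖ + ‖fderiv ℝ g p - fderiv ℝ f p‖ ≤ ε) →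
      ∀ γ : ℝ → E, ContDiffOn ℝ 1 γ (Icc x0 x1) →
        (∀ t ∈ Icc x0 x1, ‖γ t - α t‖ +
          ‖derivWithin γ (Icc x0 x1) t - derivWithin α (Icc x0 x1) t‖ ≤ ε) →
        ∀ t ∈ Icc x0 x1, ‖(g ∘ γ) t - (f ∘ α) t‖ ≤ θ ∧
          ‖derivWithin (g ∘ γ) (Icc x0 x1) t - derivWithin (f ∘ α) (Icc x0 x1) t‖ ≤ θ := by
  set I := Icc x0 x1
  have hIc : IsCompact I := isCompact_Icc
  have hud : UniqueDiffOn ℝ I := uniqueDiffOn_Icc hx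
  set K := Metric.cthickening 1 (α '' I)
  have hK : IsCompact K := (hIc.image_of_continuousOn hα.continuousOn).cthickening
  have hDf : Continuous (fderiv ℝ f) := hf.continuous_fderiv one_ne_zero
  obtain ⟨A₀, hA₀⟩ := hIc.exists_bound_of_continuousOn (hα.continuousOn_derivWithin hud le_rfl)
  obtain ⟨B₀, hB₀⟩ := hK.exists_bound_of_continuousOn hDf.continuousOn
  obtain ⟨A, hApos, hA⟩ : ∃ A > 0, ∀ t ∈ I, ‖derivWithin α I t‖ ≤ A :=
    ⟨max A₀ 1, by positivity, fun t ht => (hA₀ t ht).trans (le_max_left _ _)⟩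
  obtain ⟨B, hBpos, hB⟩ : ∃ B > 0, ∀ p ∈ K, ‖fderiv ℝ f p‖ ≤ B :=
    ⟨max B₀ 1, by positivity, fun p hp => (hB₀ p hp).trans (le_max_left _ _)⟩
  obtain ⟨ρ₁, hρ₁, hunif₁⟩ := Metric.uniformContinuousOn_iff.1
    (hK.uniformContinuousOn_of_continuous hf.continuous.continuousOn) (θ / 2) (by positivity)
  obtain ⟨ρ₂, hρ₂, hunif₂⟩ := Metric.uniformContinuousOn_iff.1
    (hK.uniformContinuousOn_of_continuous hDf.continuousOn) (θ / (3 * (A + 1))) (by positivity)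
  obtain ⟨ε, hε, hε1, hερ₁, hερ₂, hεθ, hεA, hεB⟩ : ∃ ε > 0, ε ≤ 1 ∧ ε < ρ₁ ∧ ε < ρ₂ ∧ ε ≤ θ / 2 ∧
      ε ≤ θ / (3 * (A + 1)) ∧ ε ≤ θ / (3 * B) := by
    have hpos : 0 < min 1 (min (ρ₁ / 2) (min (ρ₂ / 2) (min (θ / 2)
      (min (θ / (3 * (A + 1))) (θ / (3 * B)))))) := by positivity
    obtain ⟨ε, hε, hεlt⟩ := exists_between hpos
    simp only [lt_min_iff] at hεlt
    obtain ⟨h1, h2, h3, h4, h5, h6⟩ := hεlt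
    exact ⟨ε, hε, h1.le, by linarith, by linarith, h4.le, h5.le, h6.le⟩
  refine ⟨ε, hε, K, hK, fun g hg hgf γ hγ hγα t ht => ?_⟩
  have hγ0 : ‖γ t - α t‖ ≤ ε := (le_add_of_nonneg_right (norm_nonneg _)).trans (hγα t ht)
  have hγ1 : ‖derivWithin γ I t - derivWithin α I t‖ ≤ ε :=
    (le_add_of_nonneg_left (norm_nonneg _)).trans (hγα t ht)
  have hαK : α t ∈ K := Metric.self_subset_cthickening _ (mem_image_of_mem α ht)
  have hγK : γ t ∈ K := Metric.mem_cthickening_of_dist_le _ _ _ _ (mem_image_of_mem α ht)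
    (by rw [dist_eq_norm]; exact hγ0.trans hε1)
  have hg0 : ‖g (γ t) - f (γ t)‖ ≤ ε := (le_add_of_nonneg_right (norm_nonneg _)).trans (hgf _ hγK)
  have hg1 : ‖fderiv ℝ g (γ t) - fderiv ℝ f (γ t)‖ ≤ ε :=
    (le_add_of_nonneg_left (norm_nonneg _)).trans (hgf _ hγK)
  have hf0 := hunif₁ (γ t) hγK (α t) hαK (by rw [dist_eq_norm]; exact hγ0.trans_lt hερ₁)
  have hf1 := hunif₂ (γ t) hγK (α t) hαK (by rw [dist_eq_norm]; exact hγ0.trans_lt hερ₂)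
  rw [dist_eq_norm] at hf0 hf1
  refine ⟨(norm_sub_le_norm_sub_add_norm_sub _ (f (γ t)) _).trans ?_, ?_⟩
  · simp only [Function.comp_apply]
    linarith
  have hchain : ∀ (φ : E → G) (β : ℝ → E), ContDiff ℝ 1 φ → ContDiffOn ℝ 1 β I →
      derivWithin (φ ∘ β) I t = fderiv ℝ φ (β t) (derivWithin β I t) := fun φ β hφ hβ =>
    (((hφ.differentiable one_ne_zero) _).hasFDerivAt.comp_hasDerivWithinAt t
      ((hβ.differentiableOn one_ne_zero) t ht).hasDerivWithinAt).derivWithin (hud t ht)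
  rw [hchain g γ hg hγ, hchain f α hf hα]
  have hγ' : ‖derivWithin γ I t‖ ≤ A + 1 := by
    have h1 := norm_sub_norm_le (derivWithin γ I t) (derivWithin α I t)
    linarith [hA t ht]
  calc ‖fderiv ℝ g (γ t) (derivWithin γ I t) - fderiv ℝ f (α t) (derivWithin α I t)‖
      = ‖(fderiv ℝ g (γ t) - fderiv ℝ f (γ t)) (derivWithin γ I t) +
          (fderiv ℝ f (γ t) - fderiv ℝ f (α t)) (derivWithin γ I t) +
          fderiv ℝ f (α t) (derivWithin γ I t - derivWithin α I t)‖ := by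
        congr 1
        simp only [sub_apply, map_sub]
        abel
    _ ≤ θ / (3 * (A + 1)) * (A + 1) + θ / (3 * (A + 1)) * (A + 1) + B * (θ / (3 * B)) := by
        refine norm_add₃_le.trans ?_
        gcongr
        · exact ContinuousLinearMap.le_of_opNorm_le_of_le _ (hg1.trans hεA) hγ'
        · exact ContinuousLinearMap.le_of_opNorm_le_of_le _ hf1.le hγ'
        · exact ContinuousLinearMap.le_of_opNorm_le_of_le _ (hB _ hαK) (hγ1.trans hεB)
    _ = θ := by field_simp; norm_num

/-- A real function continuous on a compact set is bounded there by its supremum. -/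
theorem IsCompact.le_ciSup_of_continuousOn {X : Type*} [TopologicalSpace X] {K : Set X}
    (hK : IsCompact K) {u : X → ℝ} (hu : ContinuousOn u K) {p : X} (hp : p ∈ K) :
    u p ≤ ⨆ q : K, u q := by
  have hbdd : BddAbove (range fun q : K => u q) := by
    simpa only [image_eq_range] using hK.bddAbove_image hu
  exact le_ciSup hbdd ⟨p, hp⟩

/-- Triangle inequality for the `C¹`-distance, with uniform bounds on the first leg. -/
theorem C1dist_le_of_forall_norm_le {x0 x1 δ : ℝ} (hx : x0 < x1) {a b c : ℝ → ℝ × ℝ × ℝ}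
    (hb : ContDiffOn ℝ 1 b (Icc x0 x1)) (hc : ContDiffOn ℝ 1 c (Icc x0 x1))
    (hab : ∀ t ∈ Icc x0 x1, ‖b t - a t‖ ≤ δ)
    (hab' : ∀ t ∈ Icc x0 x1,
      ‖derivWithin b (Icc x0 x1) t - derivWithin a (Icc x0 x1) t‖ ≤ δ) :
    C1dist (Icc x0 x1) a c ≤ 2 * δ + C1dist (Icc x0 x1) b c := by
  have hne : Nonempty (Icc x0 x1) := ⟨⟨x0, left_mem_Icc.2 hx.le⟩⟩
  have hud : UniqueDiffOn ℝ (Icc x0 x1) := uniqueDiffOn_Icc hx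
  have key : ∀ u v w : ℝ → ℝ × ℝ × ℝ, ContinuousOn v (Icc x0 x1) → ContinuousOn w (Icc x0 x1) →
      (∀ t ∈ Icc x0 x1, ‖v t - u t‖ ≤ δ) →
      (⨆ t : Icc x0 x1, ‖u t - w t‖) ≤ δ + ⨆ t : Icc x0 x1, ‖v t - w t‖ := by
    intro u v w hv hw huv
    refine ciSup_le fun t => (norm_sub_le_norm_sub_add_norm_sub _ (v t) _).trans ?_
    rw [norm_sub_rev]
    exact add_le_add (huv t t.2)
      (isCompact_Icc.le_ciSup_of_continuousOn (u := fun t => ‖v t - w t‖) (hv.sub hw).norm t.2)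
  have h0 := key a b c hb.continuousOn hc.continuousOn hab
  have h1 := key _ _ _ (hb.continuousOn_derivWithin hud le_rfl)
    (hc.continuousOn_derivWithin hud le_rfl) hab'
  unfold C1dist
  linarith

end Helpers

/-- Quantitative form of the perturbation lemma (Lemma 2.4): if `f∘α∘s` lies in the
`C¹`-interior of `Ω`, then the same conclusion (with some reparametrisation `r`) holds for
every `g` `C¹`-close to `f` on a suitable compact set and every curve `γ` `C¹`-close to `α`. -/
theorem stmt2 (x0 x1 : ℝ) (hx : x0 < x1)
    (Ω : Set (ℝ → ℝ × ℝ × ℝ)) (hΩ : ∀ γ ∈ Ω, IsGraphCurve (Icc x0 x1) γ)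
    (f : ℝ × ℝ × ℝ → ℝ × ℝ × ℝ) (hf : ContDiff ℝ 1 f)
    (α : ℝ → ℝ × ℝ × ℝ) (hα : IsGraphCurve (Icc x0 x1) α)
    (s : ℝ → ℝ) (hs : ContDiffOn ℝ 1 s (Icc x0 x1))
    (hsmem : ∀ t ∈ Icc x0 x1, s t ∈ Ioo x0 x1)
    (hgraph : IsGraphCurve (Icc x0 x1) (f ∘ α ∘ s))
    (hint : InC1Interior (Icc x0 x1) Ω (f ∘ α ∘ s)) :
    ∃ ε > 0, ∃ K : Set (ℝ × ℝ × ℝ), IsCompact K ∧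
      ∀ g : ℝ × ℝ × ℝ → ℝ × ℝ × ℝ, ContDiff ℝ 1 g →
        (⨆ p : K, (‖g (p : ℝ × ℝ × ℝ) - f (p : ℝ × ℝ × ℝ)‖ +
          ‖fderiv ℝ g (p : ℝ × ℝ × ℝ) - fderiv ℝ f (p : ℝ × ℝ × ℝ)‖)) < ε →
        ∀ γ : ℝ → ℝ × ℝ × ℝ, ContDiffOn ℝ 1 γ (Icc x0 x1) →
          (⨆ t : Icc x0 x1, (‖γ (t : ℝ) - α (t : ℝ)‖ +
            ‖derivWithin γ (Icc x0 x1) (t : ℝ) - derivWithin α (Icc x0 x1) (t : ℝ)‖)) < ε →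
          ∃ r : ℝ → ℝ, ContDiffOn ℝ 1 r (Icc x0 x1) ∧
            (∀ t ∈ Icc x0 x1, r t ∈ Ioo x0 x1) ∧
            IsGraphCurve (Icc x0 x1) (g ∘ γ ∘ r) ∧
            InC1Interior (Icc x0 x1) Ω (g ∘ γ ∘ r) := by
  obtain ⟨δ, hδ, hδΩ⟩ := hint
  obtain ⟨θ, hθ, hreparam⟩ := exists_reparametrization_of_C1_close hx
    (hf.comp_contDiffOn hα.1) hs hsmem hgraph.2 (δ := δ / 4) (by positivity)
  obtain ⟨ε, hε, K, hK, hcomp⟩ := exists_C1_close_comp hx hf hα.1 hθ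
  refine ⟨ε, hε, K, hK, fun g hg hgf γ hγ hγα => ?_⟩
  have hud : UniqueDiffOn ℝ (Icc x0 x1) := uniqueDiffOn_Icc hx
  have hgcont : Continuous fun p => ‖g p - f p‖ + ‖fderiv ℝ g p - fderiv ℝ f p‖ :=
    (hg.continuous.sub hf.continuous).norm.add
      ((hg.continuous_fderiv one_ne_zero).sub (hf.continuous_fderiv one_ne_zero)).norm
  have hγcont : ContinuousOn (fun t => ‖γ t - α t‖ +
      ‖derivWithin γ (Icc x0 x1) t - derivWithin α (Icc x0 x1) t‖) (Icc x0 x1) :=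
    (hγ.continuousOn.sub hα.1.continuousOn).norm.add
      ((hγ.continuousOn_derivWithin hud le_rfl).sub
        (hα.1.continuousOn_derivWithin hud le_rfl)).norm
  have hclose := hcomp g hg
    (fun p hp => (hK.le_ciSup_of_continuousOn hgcont.continuousOn hp).trans hgf.le) γ hγ
    (fun t ht => (isCompact_Icc.le_ciSup_of_continuousOn hγcont ht).trans hγα.le)
  have hgγ : ContDiffOn ℝ 1 (g ∘ γ) (Icc x0 x1) := hg.comp_contDiffOn hγ
  obtain ⟨r, hr, hrmem, hfst, hval, hder⟩ := hreparam (g ∘ γ) hgγ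
    (fun t ht => (hclose t ht).1) (fun t ht => (hclose t ht).2)
  have hcurve : ContDiffOn ℝ 1 (g ∘ γ ∘ r) (Icc x0 x1) :=
    hgγ.comp hr fun t ht => Ioo_subset_Icc_self (hrmem t ht)
  refine ⟨r, hr, hrmem, ⟨hcurve, hfst⟩, δ / 2, by positivity, fun η hη hdist => hδΩ η hη ?_⟩
  have htri := C1dist_le_of_forall_norm_le hx hcurve hη.1 hval hder
  rw [Function.comp_assoc] at htri
  linarith
end

section
/- Let I ⊂ ℝ be a nonempty compact interval, let γ₀ : I → ℝ³ be continuous, let g : ℝ³ → ℝ³ be continuous, and for each n ≥ 1 let r_n : I → I be continuous. Define inductively γ_n = g∘γ_{n−1}∘r_n. Then there exists a point p in the image of γ₀ such that for every n ≥ 1, gⁿ(p) lies in the image of γ_n. -/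
open Set

/-- The composition `r 1 ∘ r 2 ∘ ⋯ ∘ r n`. -/
def iterComp {X : Type*} (r : ℕ → X → X) : ℕ → X → X
  | 0 => id
  | n + 1 => iterComp r n ∘ r (n + 1)

theorem iterComp_continuousOn {X : Type*} [TopologicalSpace X] {r : ℕ → X → X} {s : Set X}
    (hr : ∀ n, 1 ≤ n → ContinuousOn (r n) s ∧ MapsTo (r n) s s) (n : ℕ) :
    ContinuousOn (iterComp r n) s := by
  induction n with
  | zero => exact continuousOn_id
  | succ n ih => exact ih.comp (hr _ n.succ_pos).1 (hr _ n.succ_pos).2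

/-- The images of a nonempty compact set under the compositions `r 1 ∘ ⋯ ∘ r n` have a common
point. -/
theorem exists_forall_mem_iterComp_image {X : Type*} [TopologicalSpace X] [T2Space X]
    {r : ℕ → X → X} {s : Set X} (hs : IsCompact s) (hne : s.Nonempty)
    (hr : ∀ n, 1 ≤ n → ContinuousOn (r n) s ∧ MapsTo (r n) s s) :
    ∃ t, ∀ n, t ∈ iterComp r n '' s := by
  have hcompact (n : ℕ) : IsCompact (iterComp r n '' s) :=
    hs.image_of_continuousOn (iterComp_continuousOn hr n)
  obtain ⟨t, ht⟩ := IsCompact.nonempty_iInter_of_sequence_nonempty_isCompact_isClosed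
    (fun n => iterComp r n '' s)
    (fun n => by
      rintro _ ⟨x, hx, rfl⟩
      exact ⟨r (n + 1) x, (hr _ n.succ_pos).2 hx, rfl⟩)
    (fun n => hne.image _) (hcompact 0) (fun n => (hcompact n).isClosed)
  exact ⟨t, mem_iInter.mp ht⟩

theorem eq_iterate_comp_iterComp {X Y : Type*} {γ : ℕ → X → Y} {g : Y → Y} {r : ℕ → X → X}
    (hrec : ∀ n, γ (n + 1) = g ∘ γ n ∘ r (n + 1)) (n : ℕ) :
    γ n = g^[n] ∘ γ 0 ∘ iterComp r n := by
  induction n with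
  | zero => rfl
  | succ n ih =>
    rw [hrec, ih, Function.iterate_succ']
    rfl

/-- The inverse-limit/compactness argument of Proposition 2.3: given a continuous curve `γ 0`
on a nonempty compact interval, a continuous map `g`, and continuous reparametrisations
`r n : I → I`, the inductively defined curves `γ n = g ∘ γ (n-1) ∘ r n` admit a single point
`p` on `γ 0` whose `n`-th image under `g` lies on `γ n` for every `n ≥ 1`. -/
theorem stmt5 (x0 x1 : ℝ) (hx : x0 ≤ x1)
    (γ : ℕ → ℝ → ℝ × ℝ × ℝ) (g : ℝ × ℝ × ℝ → ℝ × ℝ × ℝ) (r : ℕ → ℝ → ℝ)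
    (hγ0 : ContinuousOn (γ 0) (Icc x0 x1))
    (hg : Continuous g)
    (hr : ∀ n : ℕ, 1 ≤ n →
      ContinuousOn (r n) (Icc x0 x1) ∧ MapsTo (r n) (Icc x0 x1) (Icc x0 x1))
    (hrec : ∀ n : ℕ, γ (n + 1) = g ∘ γ n ∘ r (n + 1)) :
    ∃ p ∈ γ 0 '' Icc x0 x1, ∀ n : ℕ, 1 ≤ n → g^[n] p ∈ γ n '' Icc x0 x1 := by
  obtain ⟨t, ht⟩ := exists_forall_mem_iterComp_image isCompact_Icc (nonempty_Icc.mpr hx) hr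
  have ht0 : t ∈ Icc x0 x1 := by simpa [iterComp] using ht 0
  refine ⟨γ 0 t, mem_image_of_mem _ ht0, fun n _ => ?_⟩
  obtain ⟨u, hu, rfl⟩ := ht n
  exact ⟨u, hu, congrFun (eq_iterate_comp_iterComp hrec n) u⟩
end

section
/- Let I = [x0, x1] with x0 < x1 and T = [t0, t1] ⊆ I. Let f : ℝ³ → ℝ³ be a C¹ diffeomorphism, let p_y, p_z, q_y, q_z : ℝ → ℝ be polynomial functions, and define α(t) = (t, p_y(t), p_z(t)), β(t) = (t, q_y(t), q_z(t)), φ_α(x,y,z) = (x, y + p_y(x), z + p_z(x)), φ_β(x,y,z) = (x, y + q_y(x), z + q_z(x)), and f_{α,β} = φ_β^{−1} ∘ f ∘ φ_α. Fix positive reals ε_y, ε_z, ε̂_z and an integer k > 1, and let B = T × [−ε_y, ε_y] × [−ε_z, ε_z]. Write π_x, π_y, π_z for the coordinate projections. Assume: (1) either π_x∘f_{α,β} < x0 on {t0} × [−ε_y, ε_y] × [−ε_z, ε_z] and π_x∘f_{α,β} > x1 on {t1} × [−ε_y, ε_y] × [−ε_z, ε_z], or the same with the roles of the two faces exchanged;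 (2) for every p ∈ B with π_x(f_{α,β}(p)) ∈ I, one has |π_y(f_{α,β}(p))| < ε_y and |π_z(f_{α,β}(p))| < k·ε_z; (3) for every p ∈ B with π_x(f_{α,β}(p)) ∈ I, the derivative Df_{α,β}(p) maps every nonzero vector v with |v_y| ≤ ε_y|v_x| and |v_z| ≤ ε̂_z|v_x| to a vector w with w_x ≠ 0, |w_y| < ε_y|w_x| and |w_z| < ε̂_z|w_x|. Then for every C¹ graph curve γ(t) = (t, γ_y(t), γ_z(t)) over I satisfying, for all t ∈ I, |γ_y(t)−p_y(t)| ≤ ε_y, |γ_y'(t)−p_y'(t)| ≤ ε_y, |γ_z(t)−p_z(t)| ≤ ε_z, |γ_z'(t)−p_z'(t)| ≤ ε̂_z, there exists a C¹ function s : I → I with s(I) ⊆ (x0, x1) such that f∘γ∘s is a graph curve (t, w_y(t), w_z(t)) over I satisfying, for all t ∈ I, |w_y(t)−q_y(t)| < ε_y, |w_y'(t)−q_y'(t)| < ε_y, |w_z(t)−q_z(t)| < k·ε_z, |w_z'(t)−q_z'(t)| < ε̂_z. -/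
open Set

/-- A right inverse, with values in a compact set, of a map that is continuous and injective on
that set is continuous. -/
theorem ContinuousOn.continuousOn_rightInvOn {X Y : Type*} [TopologicalSpace X]
    [TopologicalSpace Y] [T2Space Y] {g : X → Y} {s : Y → X} {K : Set X} {J : Set Y}
    (hg : ContinuousOn g K) (hK : IsCompact K) (hinj : InjOn g K) (hs : MapsTo s J K)
    (hgs : RightInvOn s g J) : ContinuousOn s J := by
  rw [continuousOn_iff_isClosed]
  intro C hC
  refine ⟨g '' (K ∩ C), ((hK.inter_right hC).image_of_continuousOn
    (hg.mono inter_subset_left)).isClosed, ?_⟩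
  ext y
  constructor
  · rintro ⟨hyC, hyJ⟩
    exact ⟨⟨s y, ⟨hs hyJ, hyC⟩, hgs hyJ⟩, hyJ⟩
  · rintro ⟨⟨x, ⟨hxK, hxC⟩, rfl⟩, hyJ⟩
    refine ⟨?_, hyJ⟩
    rwa [mem_preimage, hinj (hs hyJ) hxK (hgs hyJ)]

/-- A continuous right inverse of a `C¹` function is `C¹` where the derivative does not vanish. -/
theorem ContDiffOn.contDiffOn_rightInvOn {g s : ℝ → ℝ} {U J : Set ℝ} (hU : IsOpen U)
    (hJ : UniqueDiffOn ℝ J) (hg : ContDiffOn ℝ 1 g U) (hs : ContinuousOn s J)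
    (hsU : MapsTo s J U) (hgs : RightInvOn s g J) (hne : ∀ t ∈ J, deriv g (s t) ≠ 0) :
    ContDiffOn ℝ 1 s J := by
  have hd : ∀ t ∈ J, HasDerivWithinAt s (deriv g (s t))⁻¹ J t := by
    intro t ht
    have hgd : HasDerivAt g (deriv g (s t)) (s t) :=
      ((hg.differentiableOn one_ne_zero).differentiableAt (hU.mem_nhds (hsU ht))).hasDerivAt
    have hF := (hgd.hasFDerivAt_equiv (hne t ht)).hasFDerivWithinAt (s := univ)
    have := HasFDerivWithinAt.of_local_left_inverse (by simpa using (hs t ht).tendsto) hF ht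
      (Filter.eventually_of_mem self_mem_nhdsWithin fun x hx => hgs hx)
    simpa using this.hasDerivWithinAt
  rw [contDiffOn_one_iff_derivWithin hJ]
  refine ⟨fun t ht => (hd t ht).differentiableWithinAt, ?_⟩
  refine ContinuousOn.congr (f := fun t => (deriv g (s t))⁻¹) ?_
    fun t ht => (hd t ht).derivWithin (hJ t ht)
  exact ((hg.continuousOn_deriv_of_isOpen hU le_rfl).comp hs hsU).inv₀ hne

/-- A continuous function passing from below `x0` to above `x1` crosses `[x0, x1]` on some
subinterval whose image is exactly `[x0, x1]`. -/
theorem exists_Icc_crossing {g : ℝ → ℝ} {t0 t1 x0 x1 : ℝ} (hx : x0 < x1) (ht : t0 ≤ t1)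
    (hg : ContinuousOn g (Icc t0 t1)) (h0 : g t0 < x0) (h1 : x1 < g t1) :
    ∃ a b, t0 < a ∧ a < b ∧ b < t1 ∧ g a = x0 ∧ g b = x1 ∧
      MapsTo g (Icc a b) (Icc x0 x1) := by
  obtain ⟨a, ⟨haT, hax⟩, hamax⟩ : ∃ a, IsGreatest (Icc t0 t1 ∩ g ⁻¹' Iic x0) a :=
    (isCompact_Icc.of_isClosed_subset (hg.preimage_isClosed_of_isClosed isClosed_Icc isClosed_Iic)
      inter_subset_left).exists_isGreatest ⟨t0, left_mem_Icc.2 ht, h0.le⟩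
  have hga : g a = x0 := by
    obtain ⟨c, hc, hgc⟩ := intermediate_value_Icc haT.2 (hg.mono (Icc_subset_Icc_left haT.1))
      (show x0 ∈ Icc (g a) (g t1) from ⟨hax, (hx.trans h1).le⟩)
    have hca : c ≤ a := hamax ⟨⟨haT.1.trans hc.1, hc.2⟩, hgc.le⟩
    rwa [le_antisymm hca hc.1] at hgc
  have hgT := hg.mono (Icc_subset_Icc_left haT.1)
  obtain ⟨b, ⟨hbT, hbx⟩, hbmin⟩ : ∃ b, IsLeast (Icc a t1 ∩ g ⁻¹' Ici x1) b :=
    (isCompact_Icc.of_isClosed_subset (hgT.preimage_isClosed_of_isClosed isClosed_Icc isClosed_Ici)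
      inter_subset_left).exists_isLeast ⟨t1, right_mem_Icc.2 haT.2, h1.le⟩
  have hgb : g b = x1 := by
    obtain ⟨c, hc, hgc⟩ := intermediate_value_Icc hbT.1 (hgT.mono (Icc_subset_Icc_right hbT.2))
      (show x1 ∈ Icc (g a) (g b) from ⟨hga.trans_le hx.le, hbx⟩)
    have hbc : b ≤ c := hbmin ⟨⟨hc.1, hc.2.trans hbT.2⟩, hgc.ge⟩
    rwa [le_antisymm hc.2 hbc] at hgc
  have hab : a ≠ b := fun h => hx.ne (by rw [← hga, ← hgb, h])
  refine ⟨a, b, haT.1.lt_of_ne ?_, hbT.1.lt_of_ne hab, hbT.2.lt_of_ne ?_, hga, hgb, ?_⟩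
  · rintro rfl; exact h0.ne hga
  · rintro rfl; exact h1.ne' hgb
  · intro t htab
    constructor
    · by_contra! hlt
      have : t ≤ a := hamax ⟨⟨haT.1.trans htab.1, htab.2.trans hbT.2⟩, hlt.le⟩
      rw [le_antisymm this htab.1, hga] at hlt
      exact lt_irrefl _ hlt
    · by_contra! hlt
      have : b ≤ t := hbmin ⟨⟨htab.1, htab.2.trans hbT.2⟩, hlt.le⟩
      rw [le_antisymm htab.2 this, hgb] at hlt
      exact lt_irrefl _ hlt

/-- A `C¹` function passing from below `x0` to above `x1` without critical points over `[x0, x1]`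
admits a `C¹` right inverse on `[x0, x1]`. -/
theorem exists_contDiffOn_rightInvOn_of_crossing {g : ℝ → ℝ} {t0 t1 x0 x1 : ℝ} (hx : x0 < x1)
    (ht : t0 ≤ t1) (hg : ContDiffOn ℝ 1 g (Icc t0 t1)) (h0 : g t0 < x0) (h1 : x1 < g t1)
    (hne : ∀ t ∈ Ioo t0 t1, g t ∈ Icc x0 x1 → deriv g t ≠ 0) :
    ∃ s : ℝ → ℝ, ContDiffOn ℝ 1 s (Icc x0 x1) ∧ MapsTo s (Icc x0 x1) (Ioo t0 t1) ∧
      RightInvOn s g (Icc x0 x1) := by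
  obtain ⟨a, b, hta, hab, hbt, hga, hgb, hmaps⟩ :=
    exists_Icc_crossing hx ht hg.continuousOn h0 h1
  have hsub : Icc a b ⊆ Ioo t0 t1 := fun t h => ⟨hta.trans_le h.1, h.2.trans_lt hbt⟩
  have hgo : ContDiffOn ℝ 1 g (Ioo t0 t1) := hg.mono Ioo_subset_Icc_self
  have hgc : ContinuousOn g (Icc a b) := hgo.continuousOn.mono hsub
  have hgd : ∀ t ∈ Icc a b, HasDerivWithinAt g (deriv g t) (Icc a b) t := fun t h =>
    ((hgo.differentiableOn one_ne_zero).differentiableAt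
      (isOpen_Ioo.mem_nhds (hsub h))).hasDerivAt.hasDerivWithinAt
  have hne' : ∀ t ∈ Icc a b, deriv g t ≠ 0 := fun t h => hne t (hsub h) (hmaps h)
  have hinj : InjOn g (Icc a b) := by
    rcases hasDerivWithinAt_forall_lt_or_forall_gt_of_forall_ne (convex_Icc a b) hgd hne'
      with h | h
    · exact (strictAntiOn_of_deriv_neg (convex_Icc a b) hgc
        fun t h' => h t (interior_subset h')).injOn
    · exact (strictMonoOn_of_deriv_pos (convex_Icc a b) hgc
        fun t h' => h t (interior_subset h')).injOn
  have hsurj : SurjOn g (Icc a b) (Icc x0 x1) := by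
    have := intermediate_value_Icc hab.le hgc
    rwa [hga, hgb] at this
  have hsm := hsurj.mapsTo_invFunOn
  have hsr := hsurj.rightInvOn_invFunOn
  refine ⟨Function.invFunOn g (Icc a b), ?_, hsm.mono_right hsub, hsr⟩
  exact hgo.contDiffOn_rightInvOn isOpen_Ioo (uniqueDiffOn_Icc hx)
    (hgc.continuousOn_rightInvOn isCompact_Icc hinj hsm hsr) (hsm.mono_right hsub) hsr
    fun t h => hne' _ (hsm h)

/-- The version of `exists_contDiffOn_rightInvOn_of_crossing` for a function passing from above
`x1` to below `x0`. -/
theorem exists_contDiffOn_rightInvOn_of_crossing_down {g : ℝ → ℝ} {t0 t1 x0 x1 : ℝ} (hx : x0 < x1)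
    (ht : t0 ≤ t1) (hg : ContDiffOn ℝ 1 g (Icc t0 t1)) (h0 : x1 < g t0) (h1 : g t1 < x0)
    (hne : ∀ t ∈ Ioo t0 t1, g t ∈ Icc x0 x1 → deriv g t ≠ 0) :
    ∃ s : ℝ → ℝ, ContDiffOn ℝ 1 s (Icc x0 x1) ∧ MapsTo s (Icc x0 x1) (Ioo t0 t1) ∧
      RightInvOn s g (Icc x0 x1) := by
  have hmem : ∀ t ∈ Icc (-t1) (-t0), -t ∈ Icc t0 t1 := fun t h =>
    ⟨le_neg_of_le_neg h.2, neg_le_of_neg_le h.1⟩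
  obtain ⟨s, hs, hsm, hsr⟩ := exists_contDiffOn_rightInvOn_of_crossing
    (g := fun t => g (-t)) hx (neg_le_neg ht)
    (hg.comp contDiff_neg.contDiffOn hmem) (by simpa using h1) (by simpa using h0)
    (fun t h hgt => by
      rw [deriv_comp_neg]
      exact neg_ne_zero.2 (hne (-t) ⟨lt_neg_of_lt_neg h.2, neg_lt_of_neg_lt h.1⟩ hgt))
  exact ⟨fun t => -s t, hs.neg, fun t h =>
    ⟨lt_neg_of_lt_neg (hsm h).2, neg_lt_of_neg_lt (hsm h).1⟩, hsr⟩

theorem contDiff_of_forall_eq_eval {p : ℝ → ℝ} {n : WithTop ℕ∞}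
    (hp : ∃ P : Polynomial ℝ, ∀ t : ℝ, p t = Polynomial.eval t P) : ContDiff ℝ n p := by
  obtain ⟨P, hP⟩ := hp
  rw [funext hP]
  simpa [Polynomial.coe_aeval_eq_eval] using P.contDiff_aeval (𝕜 := ℝ) n

/-- The paper's Lemma 4.2: if `B = T × [−εy, εy] × [−εz, εz]` is a through box for the
polynomial graph curves `α(t) = (t, py t, pz t)` and `β(t) = (t, qy t, qz t)` (hypotheses
`h1`–`h3` on `f_{α,β} = φ_β⁻¹ ∘ f ∘ φ_α`), then the small u-tube around `α` maps through
the big u-tube around `β` under `f`. -/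
theorem stmt8 (x0 x1 t0 t1 : ℝ) (hx : x0 < x1) (ht : t0 ≤ t1)
    (hTI : Icc t0 t1 ⊆ Icc x0 x1)
    (f : ℝ × ℝ × ℝ → ℝ × ℝ × ℝ) (hf : ContDiff ℝ 1 f)
    (hfdiffeo : ∃ finv : ℝ × ℝ × ℝ → ℝ × ℝ × ℝ, ContDiff ℝ 1 finv ∧
      Function.LeftInverse finv f ∧ Function.RightInverse finv f)
    (py pz qy qz : ℝ → ℝ)
    (hpy : ∃ P : Polynomial ℝ, ∀ t : ℝ, py t = Polynomial.eval t P)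
    (hpz : ∃ P : Polynomial ℝ, ∀ t : ℝ, pz t = Polynomial.eval t P)
    (hqy : ∃ P : Polynomial ℝ, ∀ t : ℝ, qy t = Polynomial.eval t P)
    (hqz : ∃ P : Polynomial ℝ, ∀ t : ℝ, qz t = Polynomial.eval t P)
    (φα : ℝ × ℝ × ℝ → ℝ × ℝ × ℝ)
    (hφα : ∀ v : ℝ × ℝ × ℝ, φα v = (v.1, v.2.1 + py v.1, v.2.2 + pz v.1))
    (fab : ℝ × ℝ × ℝ → ℝ × ℝ × ℝ)
    (hfab : ∀ v : ℝ × ℝ × ℝ, fab v =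
      ((f (φα v)).1, (f (φα v)).2.1 - qy (f (φα v)).1,
        (f (φα v)).2.2 - qz (f (φα v)).1))
    (εy εz εz' : ℝ) (hεy : 0 < εy) (hεz : 0 < εz) (hεz' : 0 < εz')
    (k : ℕ) (hk : 1 < k)
    (B : Set (ℝ × ℝ × ℝ)) (hB : B = Icc t0 t1 ×ˢ Icc (-εy) εy ×ˢ Icc (-εz) εz)
    (h1 : (∀ y ∈ Icc (-εy) εy, ∀ z ∈ Icc (-εz) εz,
        (fab (t0, y, z)).1 < x0 ∧ x1 < (fab (t1, y, z)).1) ∨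
      (∀ y ∈ Icc (-εy) εy, ∀ z ∈ Icc (-εz) εz,
        x1 < (fab (t0, y, z)).1 ∧ (fab (t1, y, z)).1 < x0))
    (h2 : ∀ p ∈ B, (fab p).1 ∈ Icc x0 x1 →
      |(fab p).2.1| < εy ∧ |(fab p).2.2| < (k : ℝ) * εz)
    (h3 : ∀ p ∈ B, (fab p).1 ∈ Icc x0 x1 → ∀ v : ℝ × ℝ × ℝ, v ≠ 0 →
      |v.2.1| ≤ εy * |v.1| → |v.2.2| ≤ εz' * |v.1| →
      (fderiv ℝ fab p v).1 ≠ 0 ∧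
      |(fderiv ℝ fab p v).2.1| < εy * |(fderiv ℝ fab p v).1| ∧
      |(fderiv ℝ fab p v).2.2| < εz' * |(fderiv ℝ fab p v).1|) :
    ∀ γy γz : ℝ → ℝ,
      ContDiffOn ℝ 1 γy (Icc x0 x1) → ContDiffOn ℝ 1 γz (Icc x0 x1) →
      (∀ t ∈ Icc x0 x1, |γy t - py t| ≤ εy) →
      (∀ t ∈ Icc x0 x1, |derivWithin γy (Icc x0 x1) t - deriv py t| ≤ εy) →
      (∀ t ∈ Icc x0 x1, |γz t - pz t| ≤ εz) →
      (∀ t ∈ Icc x0 x1, |derivWithin γz (Icc x0 x1) t - deriv pz t| ≤ εz') →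
      ∃ s : ℝ → ℝ, ContDiffOn ℝ 1 s (Icc x0 x1) ∧
        (∀ t ∈ Icc x0 x1, s t ∈ Ioo x0 x1) ∧
        (∀ t ∈ Icc x0 x1, (f (s t, γy (s t), γz (s t))).1 = t) ∧
        (∀ t ∈ Icc x0 x1, |(f (s t, γy (s t), γz (s t))).2.1 - qy t| < εy) ∧
        (∀ t ∈ Icc x0 x1,
          |derivWithin (fun u => (f (s u, γy (s u), γz (s u))).2.1) (Icc x0 x1) t
            - deriv qy t| < εy) ∧
        (∀ t ∈ Icc x0 x1, |(f (s t, γy (s t), γz (s t))).2.2 - qz t| < (k : ℝ) * εz) ∧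
        (∀ t ∈ Icc x0 x1,
          |derivWithin (fun u => (f (s u, γy (s u), γz (s u))).2.2) (Icc x0 x1) t
            - deriv qz t| < εz') := by
  intro γy γz hγy hγz hy hy' hz hz'
  have hpyC : ContDiff ℝ 1 py := contDiff_of_forall_eq_eval hpy
  have hpzC : ContDiff ℝ 1 pz := contDiff_of_forall_eq_eval hpz
  have hqyC : ContDiff ℝ 1 qy := contDiff_of_forall_eq_eval hqy
  have hqzC : ContDiff ℝ 1 qz := contDiff_of_forall_eq_eval hqz
  have hφαC : ContDiff ℝ 1 φα := by
    rw [funext hφα]; fun_prop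
  have hfabC : ContDiff ℝ 1 fab := by
    rw [funext hfab]; fun_prop
  have htT : t0 ∈ Icc x0 x1 ∧ t1 ∈ Icc x0 x1 :=
    ⟨hTI (left_mem_Icc.2 ht), hTI (right_mem_Icc.2 ht)⟩
  have hIoo : Ioo t0 t1 ⊆ Ioo x0 x1 := Ioo_subset_Ioo htT.1.1 htT.2.2
  set Γ : ℝ → ℝ × ℝ × ℝ := fun t => (t, γy t - py t, γz t - pz t) with hΓ
  have hfabΓ : ∀ t, fab (Γ t) = ((f (t, γy t, γz t)).1,
      (f (t, γy t, γz t)).2.1 - qy (f (t, γy t, γz t)).1,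
      (f (t, γy t, γz t)).2.2 - qz (f (t, γy t, γz t)).1) := by
    intro t
    have : φα (Γ t) = (t, γy t, γz t) := by simp [hφα, hΓ]
    rw [hfab, this]
  have hΓC : ContDiffOn ℝ 1 Γ (Icc x0 x1) :=
    contDiffOn_id.prodMk ((hγy.sub hpyC.contDiffOn).prodMk (hγz.sub hpzC.contDiffOn))
  have hΓB : ∀ t ∈ Icc t0 t1, Γ t ∈ B := by
    intro t h
    rw [hB]
    exact ⟨h, abs_le.1 (hy t (hTI h)), abs_le.1 (hz t (hTI h))⟩
  have hΓd : ∀ t ∈ Ioo x0 x1, HasDerivAt Γ (1, derivWithin γy (Icc x0 x1) t - deriv py t,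
      derivWithin γz (Icc x0 x1) t - deriv pz t) t := by
    intro t h
    have hnhds := Icc_mem_nhds h.1 h.2
    have hI := Ioo_subset_Icc_self h
    have d1 := ((hγy.differentiableOn one_ne_zero t hI).hasDerivWithinAt).hasDerivAt hnhds
    have d2 := ((hγz.differentiableOn one_ne_zero t hI).hasDerivWithinAt).hasDerivAt hnhds
    have d3 := (hpyC.differentiable one_ne_zero t).hasDerivAt
    have d4 := (hpzC.differentiable one_ne_zero t).hasDerivAt
    exact (hasDerivAt_id t).prodMk ((d1.sub d3).prodMk (d2.sub d4))
  have hcone : ∀ t ∈ Ioo t0 t1, (fab (Γ t)).1 ∈ Icc x0 x1 → ∀ c : ℝ, c ≠ 0 →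
      ∀ w, w = fderiv ℝ fab (Γ t) (c • (1, derivWithin γy (Icc x0 x1) t - deriv py t,
        derivWithin γz (Icc x0 x1) t - deriv pz t)) →
      w.1 ≠ 0 ∧ |w.2.1| < εy * |w.1| ∧ |w.2.2| < εz' * |w.1| := by
    rintro t h hg c hc w rfl
    have hI := hTI (Ioo_subset_Icc_self h)
    refine h3 _ (hΓB t (Ioo_subset_Icc_self h)) hg _ ?_ ?_ ?_
    · intro h0
      exact hc (by simpa using congrArg Prod.fst h0)
    · simpa [abs_mul, mul_comm] using mul_le_mul_of_nonneg_left (hy' t hI) (abs_nonneg c)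
    · simpa [abs_mul, mul_comm] using mul_le_mul_of_nonneg_left (hz' t hI) (abs_nonneg c)
  have hfabd : ∀ p, HasFDerivAt fab (fderiv ℝ fab p) p := fun p =>
    (hfabC.differentiable one_ne_zero p).hasFDerivAt
  obtain ⟨s, hs, hsm, hsr⟩ : ∃ s : ℝ → ℝ, ContDiffOn ℝ 1 s (Icc x0 x1) ∧
      MapsTo s (Icc x0 x1) (Ioo t0 t1) ∧ RightInvOn s (fun t => (fab (Γ t)).1) (Icc x0 x1) := by
    have hgC : ContDiffOn ℝ 1 (fun t => (fab (Γ t)).1) (Icc t0 t1) :=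
      (hfabC.fst.comp_contDiffOn hΓC).mono hTI
    have hne : ∀ t ∈ Ioo t0 t1, (fab (Γ t)).1 ∈ Icc x0 x1 →
        deriv (fun t => (fab (Γ t)).1) t ≠ 0 := by
      intro t h hg
      have hd := hasFDerivAt_fst.comp_hasDerivAt t
        ((hfabd (Γ t)).comp_hasDerivAt t (hΓd t (hIoo h)))
      rw [show deriv (fun t => (fab (Γ t)).1) t = _ from hd.deriv]
      exact (hcone t h hg 1 one_ne_zero _ (by rw [one_smul])).1
    have hyz : ∀ t ∈ Icc x0 x1,
        γy t - py t ∈ Icc (-εy) εy ∧ γz t - pz t ∈ Icc (-εz) εz := fun t h =>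
      ⟨abs_le.1 (hy t h), abs_le.1 (hz t h)⟩
    have e0 := hyz t0 htT.1
    have e1 := hyz t1 htT.2
    rcases h1 with h1 | h1
    · exact exists_contDiffOn_rightInvOn_of_crossing hx ht hgC (h1 _ e0.1 _ e0.2).1
        (h1 _ e1.1 _ e1.2).2 hne
    · exact exists_contDiffOn_rightInvOn_of_crossing_down hx ht hgC (h1 _ e0.1 _ e0.2).1
        (h1 _ e1.1 _ e1.2).2 hne
  have hf1 : ∀ t ∈ Icc x0 x1, (f (s t, γy (s t), γz (s t))).1 = t := by
    intro t h
    have := hsr h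
    simpa only [hfabΓ] using this
  have hfabs : ∀ t ∈ Icc x0 x1, fab (Γ (s t)) = (t, (f (s t, γy (s t), γz (s t))).2.1 - qy t,
      (f (s t, γy (s t), γz (s t))).2.2 - qz t) := by
    intro t h
    rw [hfabΓ, hf1 t h]
  have hfabI : ∀ t ∈ Icc x0 x1, (fab (Γ (s t))).1 ∈ Icc x0 x1 := by
    intro t h
    rwa [hfabs t h]
  have hbox : ∀ t ∈ Icc x0 x1, |(f (s t, γy (s t), γz (s t))).2.1 - qy t| < εy ∧
      |(f (s t, γy (s t), γz (s t))).2.2 - qz t| < (k : ℝ) * εz := by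
    intro t h
    have := h2 _ (hΓB _ (Ioo_subset_Icc_self (hsm h))) (hfabI t h)
    rwa [hfabs t h] at this
  have hder : ∀ t ∈ Icc x0 x1,
      |derivWithin (fun u => (f (s u, γy (s u), γz (s u))).2.1) (Icc x0 x1) t
        - deriv qy t| < εy ∧
      |derivWithin (fun u => (f (s u, γy (s u), γz (s u))).2.2) (Icc x0 x1) t
        - deriv qz t| < εz' := by
    intro t h
    have hu := uniqueDiffOn_Icc hx t h
    have hsd := (hs.differentiableOn one_ne_zero t h).hasDerivWithinAt
    have hW := (hfabd (Γ (s t))).comp_hasDerivWithinAt t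
      ((hΓd _ (hIoo (hsm h))).scomp_hasDerivWithinAt t hsd)
    set c := derivWithin s (Icc x0 x1) t
    set w := fderiv ℝ fab (Γ (s t)) (c • (1, derivWithin γy (Icc x0 x1) (s t) - deriv py (s t),
      derivWithin γz (Icc x0 x1) (s t) - deriv pz (s t))) with hw
    have hW' := hW.congr (fun u hu => (hfabs u hu).symm) (hfabs t h).symm
    have hw1 : w.1 = 1 := hu.eq_deriv _ (hasFDerivAt_fst.comp_hasDerivWithinAt t hW') (hasDerivWithinAt_id t _)
    have hc : c ≠ 0 := by
      intro hc
      rw [hw, hc, zero_smul, map_zero] at hw1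
      exact zero_ne_one hw1
    have hq1 := (hqyC.differentiable one_ne_zero t).hasDerivAt.hasDerivWithinAt (s := Icc x0 x1)
    have hq2 := (hqzC.differentiable one_ne_zero t).hasDerivAt.hasDerivWithinAt (s := Icc x0 x1)
    have hW2 := hasFDerivAt_snd.comp_hasDerivWithinAt t hW'
    have hd1 := ((hasFDerivAt_fst.comp_hasDerivWithinAt t hW2).add hq1).congr
      (f₁ := fun u => (f (s u, γy (s u), γz (s u))).2.1)
      (fun u _ => by simp) (by simp)
    have hd2 := ((hasFDerivAt_snd.comp_hasDerivWithinAt t hW2).add hq2).congr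
      (f₁ := fun u => (f (s u, γy (s u), γz (s u))).2.2)
      (fun u _ => by simp) (by simp)
    rw [hd1.derivWithin hu, hd2.derivWithin hu, add_sub_cancel_right, add_sub_cancel_right]
    have := (hcone _ (hsm h) (hfabI t h) c hc w hw).2
    rwa [hw1, abs_one, mul_one, mul_one] at this
  exact ⟨s, hs, fun t h => hIoo (hsm h), hf1, fun t h => (hbox t h).1, fun t h => (hder t h).1,
    fun t h => (hbox t h).2, fun t h => (hder t h).2⟩
end

section
/- Let t0 < t1 and x0 ≤ x1 be real numbers and let ψ : [t0, t1] → ℝ be C¹. Suppose that either (ψ(t0) < x0 and ψ(t1) > x1) or (ψ(t0) > x1 and ψ(t1) < x0), and suppose ψ'(t) ≠ 0 for every t ∈ [t0, t1] with ψ(t) ∈ [x0, x1]. Then there exists a C¹, strictly monotone function s : [x0, x1] → (t0, t1) such that ψ(s(x)) = x for all x ∈ [x0, x1]. -/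
open Set

/-- An inverse on `S` of a function that is continuous on a compact set is continuous. -/
theorem IsCompact.continuousOn_of_leftInvOn {X Y : Type*} [TopologicalSpace X]
    [TopologicalSpace Y] [T2Space Y] {f : X → Y} {g : Y → X} {K : Set X} {S : Set Y}
    (hK : IsCompact K) (hf : ContinuousOn f K) (hgf : LeftInvOn g f K) (hfg : LeftInvOn f g S)
    (hg : MapsTo g S K) : ContinuousOn g S := by
  refine continuousOn_iff_isClosed.2 fun t ht ↦
    ⟨f '' (K ∩ t), ((hK.inter_right ht).image_of_continuousOn
      (hf.mono inter_subset_left)).isClosed, ?_⟩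
  ext y
  constructor
  · rintro ⟨hyt, hyS⟩
    exact ⟨⟨g y, ⟨hg hyS, hyt⟩, hfg hyS⟩, hyS⟩
  · rintro ⟨⟨x, ⟨hxK, hxt⟩, rfl⟩, hyS⟩
    exact ⟨by rwa [mem_preimage, hgf hxK], hyS⟩

/-- A continuous right inverse of a `C^n` function with nonvanishing derivative is `C^n`. -/
theorem ContinuousWithinAt.contDiffWithinAt_of_rightInverse {f g : ℝ → ℝ} {S : Set ℝ} {x : ℝ}
    {n : WithTop ℕ∞} (hn : n ≠ 0) (hg : ContinuousWithinAt g S x) (hfg : LeftInvOn f g S)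
    (hx : x ∈ S) (hf : ContDiffAt ℝ n f (g x)) (hd : deriv f (g x) ≠ 0) :
    ContDiffWithinAt ℝ n g S x := by
  have hderiv := (hf.differentiableAt hn).hasDerivAt.hasFDerivAt_equiv hd
  have hinv := hf.to_localInverse hderiv hn
  rw [hfg hx] at hinv
  refine hinv.contDiffWithinAt.congr_of_eventuallyEq_of_mem ?_ hx
  filter_upwards [hg.eventually (hf.hasStrictFDerivAt' hderiv hn).eventually_left_inverse,
    self_mem_nhdsWithin] with y hy hyS
  rw [hfg hyS] at hy
  exact hy.symm

/-- A continuous function that goes from below `x0` to above `x1` crosses `[x0, x1]` on some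
subinterval without leaving it. -/
theorem ContinuousOn.exists_Icc_mapsTo_Icc {f : ℝ → ℝ} {t0 t1 x0 x1 : ℝ} (ht : t0 ≤ t1)
    (hx : x0 ≤ x1) (hf : ContinuousOn f (Icc t0 t1)) (h0 : f t0 < x0) (h1 : x1 < f t1) :
    ∃ a b, a ≤ b ∧ Icc a b ⊆ Ioo t0 t1 ∧ f a = x0 ∧ f b = x1 ∧
      MapsTo f (Icc a b) (Icc x0 x1) := by
  obtain ⟨a, ⟨ha, hfa⟩, hamax⟩ :=
    (isCompact_Icc.of_isClosed_subset (hf.preimage_isClosed_of_isClosed isClosed_Icc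
      (isClosed_singleton (x := x0))) inter_subset_left).exists_isGreatest
      (intermediate_value_Icc ht hf ⟨h0.le, by linarith⟩)
  rw [mem_preimage, mem_singleton_iff] at hfa
  have hfa1 : ContinuousOn f (Icc a t1) := hf.mono (Icc_subset_Icc_left ha.1)
  obtain ⟨b, ⟨hb, hfb⟩, hbmin⟩ :=
    (isCompact_Icc.of_isClosed_subset (hfa1.preimage_isClosed_of_isClosed isClosed_Icc
      (isClosed_singleton (x := x1))) inter_subset_left).exists_isLeast
      (intermediate_value_Icc ha.2 hfa1 ⟨hfa.trans_le hx, h1.le⟩)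
  rw [mem_preimage, mem_singleton_iff] at hfb
  have hta : t0 < a := ha.1.lt_of_ne (by rintro rfl; exact h0.ne hfa)
  have hbt : b < t1 := hb.2.lt_of_ne (by rintro rfl; exact h1.ne' hfb)
  refine ⟨a, b, hb.1, fun t h ↦ ⟨hta.trans_le h.1, h.2.trans_lt hbt⟩, hfa, hfb,
    fun t h ↦ ⟨?_, ?_⟩⟩
  · by_contra! hlt
    obtain ⟨u, hu, hfu⟩ := intermediate_value_Icc (h.2.trans hb.2)
      (hfa1.mono (Icc_subset_Icc_left h.1)) ⟨hlt.le, by linarith⟩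
    have hua : u ≤ a := hamax ⟨⟨by linarith [h.1, hu.1], hu.2⟩, hfu⟩
    have hta' : t = a := by linarith [h.1, hu.1]
    exact hlt.ne (hta' ▸ hfa)
  · by_contra! hlt
    obtain ⟨u, hu, hfu⟩ := intermediate_value_Icc h.1
      (hfa1.mono (Icc_subset_Icc_right (h.2.trans hb.2))) ⟨hfa.trans_le hx, hlt.le⟩
    have hub : b ≤ u := hbmin ⟨⟨hu.1, by linarith [hu.2, h.2, hb.2]⟩, hfu⟩
    have htb : t = b := by linarith [h.2, hu.2]
    exact hlt.ne' (htb ▸ hfb)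

/-- A differentiable function whose derivative does not vanish on `[a, b]` is injective there. -/
theorem injOn_Icc_of_deriv_ne_zero {f : ℝ → ℝ} {a b : ℝ} (hf : ContinuousOn f (Icc a b))
    (hd : ∀ t ∈ Icc a b, deriv f t ≠ 0) : InjOn f (Icc a b) := by
  have hne : ∀ u ∈ Icc a b, ∀ v ∈ Icc a b, u < v → f u ≠ f v := fun u hu v hv huv h ↦ by
    obtain ⟨c, hc, hc0⟩ := exists_deriv_eq_zero huv (hf.mono (Icc_subset_Icc hu.1 hv.2)) h
    exact hd c ⟨hu.1.trans hc.1.le, hc.2.le.trans hv.2⟩ hc0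
  intro u hu v hv h
  rcases lt_trichotomy u v with huv | huv | huv
  · exact absurd h (hne u hu v hv huv)
  · exact huv
  · exact absurd h.symm (hne v hv u hu huv)

/-- The section lemma for a function that crosses the target interval upwards. -/
theorem exists_contDiffOn_strictMonoOn_section {t0 t1 x0 x1 : ℝ} (ht : t0 ≤ t1) (hx : x0 ≤ x1)
    {f : ℝ → ℝ} (hf : ContDiffOn ℝ 1 f (Icc t0 t1)) (h0 : f t0 < x0) (h1 : x1 < f t1)
    (hd : ∀ t ∈ Icc t0 t1, f t ∈ Icc x0 x1 → derivWithin f (Icc t0 t1) t ≠ 0) :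
    ∃ s : ℝ → ℝ, ContDiffOn ℝ 1 s (Icc x0 x1) ∧ StrictMonoOn s (Icc x0 x1) ∧
      MapsTo s (Icc x0 x1) (Ioo t0 t1) ∧ LeftInvOn f s (Icc x0 x1) := by
  obtain ⟨a, b, hab, hsub, hfa, hfb, hmaps⟩ :=
    hf.continuousOn.exists_Icc_mapsTo_Icc ht hx h0 h1
  have hnhds : ∀ t ∈ Icc a b, Icc t0 t1 ∈ nhds t := fun t h ↦
    Icc_mem_nhds (hsub h).1 (hsub h).2
  have hcont : ContinuousOn f (Icc a b) :=
    hf.continuousOn.mono (hsub.trans Ioo_subset_Icc_self)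
  have hderiv : ∀ t ∈ Icc a b, deriv f t ≠ 0 := fun t h ↦ by
    rw [← derivWithin_of_mem_nhds (hnhds t h)]
    exact hd t (Ioo_subset_Icc_self (hsub h)) (hmaps h)
  have hinj := injOn_Icc_of_deriv_ne_zero hcont hderiv
  have hmono : StrictMonoOn f (Icc a b) :=
    hcont.strictMonoOn_of_injOn_Icc hab (by rwa [hfa, hfb]) hinj
  have hsurj : SurjOn f (Icc a b) (Icc x0 x1) := by
    rw [← hfa, ← hfb]
    exact intermediate_value_Icc hab hcont
  choose! s hs hfs using hsurj
  have hfs' : LeftInvOn f s (Icc x0 x1) := hfs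
  have hsf : LeftInvOn s f (Icc a b) := fun t h ↦ hinj (hs (hmaps h)) h (hfs (hmaps h))
  have hscont := isCompact_Icc.continuousOn_of_leftInvOn hcont hsf hfs' hs
  refine ⟨s, fun x h ↦ ?_, fun x h y h' hxy ↦ ?_, fun x h ↦ hsub (hs h), hfs'⟩
  · exact (hscont x h).contDiffWithinAt_of_rightInverse one_ne_zero hfs' h
      (hf.contDiffAt (hnhds _ (hs h))) (hderiv _ (hs h))
  · rwa [← hmono.lt_iff_lt (hs h) (hs h'), hfs h, hfs h']

/-- The one-dimensional section lemma: a `C¹` function on `[t0, t1]` whose endpoint values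
lie on opposite sides of the target interval `[x0, x1]`, and whose derivative does not vanish
on the preimage of `[x0, x1]`, admits a `C¹`, strictly monotone inverse branch defined on all
of `[x0, x1]` with values in `(t0, t1)`. -/
theorem stmt9 (t0 t1 x0 x1 : ℝ) (ht : t0 < t1) (hx : x0 ≤ x1)
    (ψ : ℝ → ℝ) (hψ : ContDiffOn ℝ 1 ψ (Icc t0 t1))
    (hend : (ψ t0 < x0 ∧ x1 < ψ t1) ∨ (x1 < ψ t0 ∧ ψ t1 < x0))
    (hd : ∀ t ∈ Icc t0 t1, ψ t ∈ Icc x0 x1 → derivWithin ψ (Icc t0 t1) t ≠ 0) :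
    ∃ s : ℝ → ℝ, ContDiffOn ℝ 1 s (Icc x0 x1) ∧
      (StrictMonoOn s (Icc x0 x1) ∨ StrictAntiOn s (Icc x0 x1)) ∧
      (∀ x ∈ Icc x0 x1, s x ∈ Ioo t0 t1) ∧
      (∀ x ∈ Icc x0 x1, ψ (s x) = x) := by
  rcases hend with ⟨h0, h1⟩ | ⟨h0, h1⟩
  · obtain ⟨s, hs, hmono, hmaps, hinv⟩ :=
      exists_contDiffOn_strictMonoOn_section ht.le hx hψ h0 h1 hd
    exact ⟨s, hs, Or.inl hmono, hmaps, hinv⟩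
  · have hneg : ∀ x ∈ Icc x0 x1, -x ∈ Icc (-x1) (-x0) := fun x h ↦
      ⟨neg_le_neg h.2, neg_le_neg h.1⟩
    obtain ⟨s, hs, hmono, hmaps, hinv⟩ :=
      exists_contDiffOn_strictMonoOn_section ht.le (neg_le_neg hx) hψ.neg (neg_lt_neg h0)
        (neg_lt_neg h1) fun t h h' ↦ by
          rw [derivWithin.fun_neg]
          exact neg_ne_zero.2 (hd t h ⟨neg_le_neg_iff.1 h'.2, neg_le_neg_iff.1 h'.1⟩)
    exact ⟨fun x ↦ s (-x), hs.comp contDiff_neg.contDiffOn hneg,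
      Or.inr fun x h y h' hxy ↦ hmono (hneg y h') (hneg x h) (neg_lt_neg hxy),
      fun x h ↦ hmaps (hneg x h), fun x h ↦ neg_injective (hinv (hneg x h))⟩
end
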